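/- arXiv:2108.03295 — 2 statements merged into one kernel-verified Lean document; each statement's English description precedes it below -/
import Mathlib

section
/- Let P be a partially ordered set with a greatest element ⊤. If a, b ∈ P are non-generators and c ∈ P is a least upper bound of a and b (i.e., the join a ∨ b exists in P and equals c), then c is a non-generator. -/
def JoinIsTop {P : Type*} [PartialOrder P] [OrderTop P] (a e : P) : Prop :=
  ¬ ∃ p : P, p < ⊤ ∧ a ≤ p ∧ e ≤ p

def NonGenerator {P : Type*} [PartialOrder P] [OrderTop P] (a : P) : Prop :=
  ∀ e : P, JoinIsTop a e → e = ⊤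

section

variable {P : Type*} [PartialOrder P] [OrderTop P]

theorem nonGenerator_iff_forall_lt_top {a : P} :
    NonGenerator a ↔ ∀ e < ⊤, ∃ p < ⊤, a ≤ p ∧ e ≤ p := by
  simp only [NonGenerator, JoinIsTop, lt_top_iff_ne_top]
  exact forall_congr' fun _ ↦ not_imp_comm

/- Each element of `s` is absorbed in turn: a proper element above `e` and the elements treated so
far plays the role of `e` for the next one. -/
theorem exists_lt_top_mem_upperBounds_of_nonGenerator {s : Set P} (hs : s.Finite)
    (hgen : ∀ a ∈ s, NonGenerator a) {e : P} (he : e < ⊤) :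
    ∃ p < ⊤, p ∈ upperBounds s ∧ e ≤ p := by
  induction s, hs using Set.Finite.induction_on with
  | empty => exact ⟨e, he, by simp, le_rfl⟩
  | @insert a t _ _ ih =>
    obtain ⟨ha, ht⟩ := Set.forall_mem_insert.mp hgen
    obtain ⟨p, hp, hpt, hep⟩ := ih ht
    obtain ⟨q, hq, haq, hpq⟩ := nonGenerator_iff_forall_lt_top.mp ha p hp
    have hqt : q ∈ upperBounds t := upperBounds_mono_mem hpq hpt
    exact ⟨q, hq, Set.forall_mem_insert.mpr ⟨haq, hqt⟩, hep.trans hpq⟩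

theorem stmt_1_general {s : Set P} (hs : s.Finite) (hgen : ∀ a ∈ s, NonGenerator a) {c : P}
    (hc : c ∈ lowerBounds (upperBounds s)) : NonGenerator c := by
  refine nonGenerator_iff_forall_lt_top.mpr fun e he ↦ ?_
  obtain ⟨p, hp, hps, hep⟩ := exists_lt_top_mem_upperBounds_of_nonGenerator hs hgen he
  exact ⟨p, hp, hc hps, hep⟩

end

theorem stmt_1 {P : Type*} [PartialOrder P] [OrderTop P] (a b c : P)
    (ha : NonGenerator a) (hb : NonGenerator b)
    (hc : IsLUB {a, b} c) : NonGenerator c := by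
  exact stmt_1_general (Set.toFinite {a, b}) (by simp [ha, hb]) hc.2
end

section
/- Let R be a partially ordered set with greatest element ⊤ and let P ⊆ R with ⊤ ∈ P. Let a ∈ R and suppose c is a smallest element of P above a, that is, c ∈ P, a ≤ c, and c ≤ d for every d ∈ P with a ≤ d. Then a is a P-non-generator in R if and only if c is a non-generator in the induced partial order on P, i.e., for every e ∈ P, if there is no p ∈ P with p < ⊤, c ≤ p and e ≤ p, then e = ⊤. -/
/-- `Y` P-generates `⊤`: no closed bound of `Y` below `⊤`. -/
def PGeneratesTop {R : Type*} [PartialOrder R] [OrderTop R] (P : Set R) (Y : Set R) : Prop :=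
  ¬ ∃ b ∈ P, b < ⊤ ∧ ∀ y ∈ Y, y ≤ b

def PNonGenerator {R : Type*} [PartialOrder R] [OrderTop R] (P : Set R) (a : R) : Prop :=
  ∀ e : R, PGeneratesTop P {a, e} → PGeneratesTop P {e}

section

variable {R : Type*} [PartialOrder R] [OrderTop R] {P Y : Set R} {a c e : R}

theorem pGeneratesTop_iff_forall_eq_top :
    PGeneratesTop P Y ↔ ∀ b ∈ P, b ∈ upperBounds Y → b = ⊤ := by
  simp only [PGeneratesTop, lt_top_iff_ne_top, mem_upperBounds, not_exists, not_and, ne_eq,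
    not_imp_not]

theorem pGeneratesTop_pair_iff :
    PGeneratesTop P {a, e} ↔ ¬ ∃ p ∈ P, p < ⊤ ∧ a ≤ p ∧ e ≤ p := by
  simp only [PGeneratesTop, Set.forall_mem_insert, Set.mem_singleton_iff, forall_eq]

theorem pGeneratesTop_singleton_iff_of_mem (he : e ∈ P) : PGeneratesTop P {e} ↔ e = ⊤ := by
  rw [pGeneratesTop_iff_forall_eq_top, upperBounds_singleton]
  exact ⟨fun h ↦ h e he le_rfl, fun h _ _ heb ↦ top_le_iff.mp (h.symm.trans_le heb)⟩

theorem pGeneratesTop_pair_congr_left (h : ∀ p ∈ P, a ≤ p ↔ c ≤ p) :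
    PGeneratesTop P {a, e} ↔ PGeneratesTop P {c, e} := by
  simp only [pGeneratesTop_pair_iff]
  exact not_congr <| exists_congr fun p ↦ and_congr_right fun hp ↦
    and_congr_right' <| and_congr_left' (h p hp)

theorem PGeneratesTop.pair_mono_right {b : R} (heb : e ≤ b) (hgen : PGeneratesTop P {a, e}) :
    PGeneratesTop P {a, b} := by
  rw [pGeneratesTop_pair_iff] at hgen ⊢
  exact fun ⟨p, hp, hlt, hap, hbp⟩ ↦ hgen ⟨p, hp, hlt, hap, heb.trans hbp⟩

theorem pNonGenerator_iff_forall_mem :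
    PNonGenerator P a ↔ ∀ e ∈ P, PGeneratesTop P {a, e} → e = ⊤ := by
  constructor
  · intro h e he hgen
    exact (pGeneratesTop_singleton_iff_of_mem he).mp (h e hgen)
  · intro h e hgen
    -- A closed bound `b` of `e` may replace `e` as the test element.
    exact pGeneratesTop_iff_forall_eq_top.mpr fun b hb heb ↦
      h b hb (hgen.pair_mono_right (heb rfl))

theorem stmt_15_general (h : ∀ p ∈ P, a ≤ p ↔ c ≤ p) :
    PNonGenerator P a ↔
      ∀ e ∈ P, (¬ ∃ p ∈ P, p < ⊤ ∧ c ≤ p ∧ e ≤ p) → e = ⊤ := by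
  simp only [pNonGenerator_iff_forall_mem, pGeneratesTop_pair_congr_left h,
    pGeneratesTop_pair_iff]

end

theorem stmt_15 {R : Type*} [PartialOrder R] [OrderTop R] (P : Set R)
    (htop : (⊤ : R) ∈ P) (a c : R)
    (hcP : c ∈ P) (hac : a ≤ c) (hmin : ∀ d ∈ P, a ≤ d → c ≤ d) :
    PNonGenerator P a ↔
      ∀ e ∈ P, (¬ ∃ p ∈ P, p < ⊤ ∧ c ≤ p ∧ e ≤ p) → e = ⊤ :=
  stmt_15_general fun d hd ↦ ⟨hmin d hd, hac.trans⟩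
end
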